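/- Bound on the mixed Gaussian–algebraic convolution integral IV_j. Let M > 0, c₁, c₂ ∈ ℝ with c₁ ≠ c₂, r ≥ 3 and j ∈ {0,1}. Then there exists a constant C > 0 such that for every x ∈ ℝ and every t ≥ 0: ∫_0^t ∫_ℝ exp( −4(x−y+c₁(t−s))²/(M(t−s)) − (y+c₂s)²/(M(1+s)) ) / ( √(1+s) (1 + |y+c₁s| + √s)^r (t−s)^{(1+j)/2} ) dy ds ≤ C [ (1 + |x+c₁t| + √t)^{−r} + e^{−(x+c₁t)²/(M(1+t))}/√(1+t) ]. -/

import Mathlib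

open MeasureTheory Set

noncomputable section

lemma aux_gauss (k p : ℝ) (hk : 0 < k) :
    Integrable (fun y : ℝ => Real.exp (-(y - p) ^ 2 / k)) ∧
      ∫ y : ℝ, Real.exp (-(y - p) ^ 2 / k) = Real.sqrt (Real.pi * k) := by
  have e : ∀ y : ℝ, Real.exp (-(y - p) ^ 2 / k) = (fun z => Real.exp (-k⁻¹ * z ^ 2)) (y - p) := by
    intro y
    simp only []
    congr 1
    field_simp
  have hk' : 0 < k⁻¹ := inv_pos.mpr hk
  refine ⟨?_, ?_⟩
  · simp_rw [e]
    exact (integrable_exp_neg_mul_sq hk').comp_sub_right p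
  · simp_rw [e]
    rw [integral_sub_right_eq_self (fun z => Real.exp (-k⁻¹ * z ^ 2)) p, integral_gaussian]
    congr 1
    field_simp

lemma aux_min (M τ σ p b : ℝ) (hM : 0 < M) (hτ : 0 < τ) (hσ : 0 < σ) :
    ∃ h : ℝ → ℝ, Integrable h ∧
      (∀ y, Real.exp (-(4 * (p - y) ^ 2) / (M * τ) - (y - b) ^ 2 / (M * σ)) ≤ h y) ∧
      ∫ y, h y ≤ Real.sqrt (2 * Real.pi * M) * (Real.sqrt τ * Real.sqrt σ / Real.sqrt (τ + σ)) := by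
  have hpi := Real.pi_pos
  have hR : Real.sqrt (2 * Real.pi * M) * (Real.sqrt τ * Real.sqrt σ / Real.sqrt (τ + σ)) =
      Real.sqrt (2 * Real.pi * M * (τ * σ / (τ + σ))) := by
    rw [Real.sqrt_mul (x := 2 * Real.pi * M) (by positivity), Real.sqrt_div (by positivity), Real.sqrt_mul hτ.le]
  rw [hR]
  rcases le_total τ σ with hle | hle
  · obtain ⟨h1, h2⟩ := aux_gauss (M * τ) p (by positivity)
    refine ⟨_, h1, ?_, ?_⟩
    · intro y
      apply Real.exp_le_exp.mpr
      have e1 : 0 ≤ (y - b) ^ 2 / (M * σ) := by positivity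
      have e2 : -(4 * (p - y) ^ 2) / (M * τ) ≤ -(y - p) ^ 2 / (M * τ) := by
        apply div_le_div_of_nonneg_right _ (by positivity)
        nlinarith [sq_nonneg (p - y)]
      linarith
    · rw [h2]
      apply Real.sqrt_le_sqrt
      have : τ ≤ 2 * (τ * σ / (τ + σ)) := by
        rw [← mul_div_assoc, le_div_iff₀ (by positivity)]
        nlinarith
      have h3 : 0 < Real.pi * M := by positivity
      nlinarith
  · obtain ⟨h1, h2⟩ := aux_gauss (M * σ) b (by positivity)
    refine ⟨_, h1, ?_, ?_⟩
    · intro y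
      apply Real.exp_le_exp.mpr
      have e1 : 0 ≤ (4 * (p - y) ^ 2) / (M * τ) := by positivity
      rw [neg_div, neg_div]
      linarith
    · rw [h2]
      apply Real.sqrt_le_sqrt
      have : σ ≤ 2 * (τ * σ / (τ + σ)) := by
        rw [← mul_div_assoc, le_div_iff₀ (by positivity)]
        nlinarith
      have h3 : 0 < Real.pi * M := by positivity
      nlinarith

lemma aux_near (M τ σ X : ℝ) (hM : 0 < M) (hτ : 0 < τ) (hσ : 0 < σ) (hX : τ + σ ≤ X ^ 2) :
    Real.exp (-X ^ 2 / (M * τ)) / Real.sqrt τ ≤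
      Real.sqrt (1 + M) * (Real.exp (-X ^ 2 / (M * (τ + σ))) / Real.sqrt (τ + σ)) := by
  have hT : 0 < τ + σ := by positivity
  have h1 : -X ^ 2 / (M * τ) ≤ -X ^ 2 / (M * (τ + σ)) + -(σ / (M * τ)) := by
    have e : -X ^ 2 / (M * τ) = -X ^ 2 / (M * (τ + σ)) - (σ / (M * τ)) * (X ^ 2 / (τ + σ)) := by
      field_simp
      ring
    have e2 : 1 ≤ X ^ 2 / (τ + σ) := by rwa [le_div_iff₀ hT, one_mul]
    have e3 : 0 < σ / (M * τ) := by positivity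
    rw [e]
    nlinarith
  set w := σ / (M * τ) with hw
  have hw0 : 0 < w := by positivity
  have h2 : Real.exp (-w) ≤ 1 / Real.sqrt (1 + w) := by
    rw [Real.exp_neg, ← one_div]
    apply one_div_le_one_div_of_le (Real.sqrt_pos.mpr (by positivity))
    have : 1 + w ≤ Real.exp w := by linarith [Real.add_one_le_exp w]
    refine le_trans ?_ this
    rw [Real.sqrt_le_left (by positivity)]
    nlinarith
  have h3 : Real.sqrt (τ + σ) ≤ Real.sqrt (1 + M) * (Real.sqrt (1 + w) * Real.sqrt τ) := by
    rw [← Real.sqrt_mul (by positivity), ← Real.sqrt_mul (by positivity)]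
    apply Real.sqrt_le_sqrt
    have : (1 + w) * τ = τ + σ / M := by rw [hw]; field_simp
    rw [this]
    have : (1 + M) * (τ + σ / M) = τ + σ + M * τ + σ / M := by field_simp; ring
    rw [this]
    have : 0 < M * τ := by positivity
    have : 0 < σ / M := by positivity
    linarith
  have hs1 := Real.sqrt_pos.mpr hT
  have hs2 := Real.sqrt_pos.mpr hτ
  have hs3 : 0 < Real.sqrt (1 + w) := Real.sqrt_pos.mpr (by positivity)
  calc Real.exp (-X ^ 2 / (M * τ)) / Real.sqrt τ
      ≤ (Real.exp (-X ^ 2 / (M * (τ + σ))) * (1 / Real.sqrt (1 + w))) / Real.sqrt τ := by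
        apply div_le_div_of_nonneg_right _ hs2.le
        refine (Real.exp_le_exp.mpr h1).trans ?_
        rw [Real.exp_add]
        exact mul_le_mul_of_nonneg_left h2 (Real.exp_pos _).le
    _ = Real.exp (-X ^ 2 / (M * (τ + σ))) * (1 / (Real.sqrt (1 + w) * Real.sqrt τ)) := by
        field_simp
    _ ≤ Real.exp (-X ^ 2 / (M * (τ + σ))) * (Real.sqrt (1 + M) / Real.sqrt (τ + σ)) := by
        apply mul_le_mul_of_nonneg_left _ (Real.exp_pos _).le
        rw [div_le_div_iff₀ (by positivity) hs1, one_mul]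
        exact h3
    _ = _ := by ring

lemma aux_key (τ σ p b y : ℝ) (hτ : 0 < τ) (hσ : 0 < σ) :
    (p - b) ^ 2 / (τ + σ) ≤ 4 * (p - y) ^ 2 / τ + (y - b) ^ 2 / σ := by
  have k1 : (p - b) ^ 2 / (τ + σ) ≤ (p - y) ^ 2 / τ + (y - b) ^ 2 / σ := by
    rw [div_add_div _ _ hτ.ne' hσ.ne', div_le_div_iff₀ (by positivity) (by positivity)]
    have e : ((p - y) ^ 2 * σ + τ * (y - b) ^ 2) * (τ + σ) - (p - b) ^ 2 * (τ * σ) =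
      ((p - y) * σ - (y - b) * τ) ^ 2 := by ring
    have := sq_nonneg ((p - y) * σ - (y - b) * τ)
    linarith
  have k2 : (p - y) ^ 2 / τ ≤ 4 * (p - y) ^ 2 / τ := by
    gcongr
    linarith [sq_nonneg (p - y)]
  linarith

set_option maxHeartbeats 1600000 in
lemma aux_inner (M r : ℝ) (hM : 0 < M) (hr : 0 < r) :
    ∃ K : ℝ, 0 < K ∧ ∀ τ σ p b X ρ θ W : ℝ, 0 < τ → 0 < σ → 0 < W → 0 ≤ ρ → 0 ≤ θ →
      θ ^ 2 ≤ τ + σ →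
      ∫ y : ℝ, Real.exp (-(4 * (p - y) ^ 2) / (M * τ) - (y - b) ^ 2 / (M * σ)) /
          (Real.sqrt σ * (1 + |X - (p - y)| + ρ) ^ r * (Real.sqrt τ * W)) ≤
        K * ((Real.exp (-X ^ 2 / (M * (τ + σ))) / Real.sqrt (τ + σ)) * (W⁻¹ * ((1 + ρ) ^ r)⁻¹) +
          (1 + |X| + θ) ^ (-r) * (W⁻¹ * (Real.sqrt (τ + σ))⁻¹ *
            Real.exp (-(p - b) ^ 2 / (2 * M * (τ + σ))))) := by
  have hpi := Real.pi_pos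
  set K1 := Real.sqrt (2 * Real.pi * M) * Real.exp (1 / M) with hK1
  set K2 := Real.sqrt (Real.pi * M) * Real.sqrt (1 + M) with hK2
  set K3 := (4:ℝ) ^ r * Real.sqrt (2 * Real.pi * (2 * M)) with hK3
  have hK1p : 0 < K1 := by positivity
  have hK2p : 0 < K2 := by positivity
  have hK3p : 0 < K3 := by positivity
  refine ⟨K1 + K2 + K3, by positivity, ?_⟩
  intro τ σ p b X ρ θ W hτ hσ hW hρ hθ hθT
  have hT : 0 < τ + σ := by positivity
  have hsτ := Real.sqrt_pos.mpr hτ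
  have hsσ := Real.sqrt_pos.mpr hσ
  have hsT := Real.sqrt_pos.mpr hT
  set S := Real.exp (-X ^ 2 / (M * (τ + σ))) / Real.sqrt (τ + σ) with hS
  set R := (1 + |X| + θ) ^ (-r) with hR
  set Q := Real.exp (-(p - b) ^ 2 / (2 * M * (τ + σ))) with hQ
  have hSp : 0 < S := by positivity
  have hRp : 0 < R := by positivity
  have hQp : 0 < Q := Real.exp_pos _
  have hρr : 0 < (1 + ρ) ^ r := by positivity
  have hD : ∀ y, (1 + ρ) ^ r ≤ (1 + |X - (p - y)| + ρ) ^ r := fun y =>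
    Real.rpow_le_rpow (by positivity) (by linarith [abs_nonneg (X - (p - y))]) hr.le
  set A := S * (W⁻¹ * ((1 + ρ) ^ r)⁻¹) with hA
  set B := R * (W⁻¹ * (Real.sqrt (τ + σ))⁻¹ * Q) with hB
  have hAp : 0 < A := by positivity
  have hBp : 0 < B := by positivity
  have hf0 : 0 ≤ᵐ[volume] fun y : ℝ =>
      Real.exp (-(4 * (p - y) ^ 2) / (M * τ) - (y - b) ^ 2 / (M * σ)) /
          (Real.sqrt σ * (1 + |X - (p - y)| + ρ) ^ r * (Real.sqrt τ * W)) :=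
    Filter.Eventually.of_forall fun y => by
      simp only [Pi.zero_apply]
      positivity
  rcases le_total (X ^ 2) (τ + σ) with hX | hX
  · obtain ⟨h, hi, hle, hint⟩ := aux_min M τ σ p b hM hτ hσ
    calc _ ≤ ∫ y, h y * (Real.sqrt σ * (1 + ρ) ^ r * (Real.sqrt τ * W))⁻¹ := by
          apply integral_mono_of_nonneg hf0 (hi.mul_const _)
          refine Filter.Eventually.of_forall fun y => ?_
          simp only []
          rw [div_eq_mul_inv]
          have := hD y
          have h0 : 0 ≤ h y := (Real.exp_pos _).le.trans (hle y)
          gcongr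
          exact hle y
      _ = (∫ y, h y) * (Real.sqrt σ * (1 + ρ) ^ r * (Real.sqrt τ * W))⁻¹ := by
          rw [integral_mul_const]
      _ ≤ (Real.sqrt (2 * Real.pi * M) * (Real.sqrt τ * Real.sqrt σ / Real.sqrt (τ + σ))) *
            (Real.sqrt σ * (1 + ρ) ^ r * (Real.sqrt τ * W))⁻¹ := by gcongr
      _ = Real.sqrt (2 * Real.pi * M) * (1 / Real.sqrt (τ + σ)) * (W⁻¹ * ((1 + ρ) ^ r)⁻¹) := by
          field_simp
      _ ≤ Real.sqrt (2 * Real.pi * M) * (Real.exp (1 / M) * S) * (W⁻¹ * ((1 + ρ) ^ r)⁻¹) := by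
          gcongr
          rw [hS, ← mul_div_assoc, ← Real.exp_add]
          gcongr
          apply Real.one_le_exp
          have : 1 / M + -X ^ 2 / (M * (τ + σ)) = (τ + σ - X ^ 2) / (M * (τ + σ)) := by
            field_simp
            ring
          rw [this]
          apply div_nonneg (by linarith) (by positivity)
      _ = K1 * A := by rw [hK1, hA]; ring
      _ ≤ (K1 + K2 + K3) * (A + B) := by nlinarith [mul_pos hK1p hBp, mul_pos hK2p hBp, mul_pos hK3p hBp, mul_pos hK2p hAp, mul_pos hK3p hAp]
  · obtain ⟨h, hi, hle, hint⟩ := aux_min (2 * M) τ σ p b (by positivity) hτ hσ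
    obtain ⟨gi, gint⟩ := aux_gauss (M * σ) b (by positivity)
    have hθX : θ ≤ |X| := by
      apply abs_le_of_sq_le_sq' _ (abs_nonneg X) |>.2
      rw [sq_abs]; linarith
    set cN := Real.exp (-X ^ 2 / (M * τ)) / Real.sqrt τ * ((Real.sqrt σ)⁻¹ * (W⁻¹ * ((1 + ρ) ^ r)⁻¹)) with hcN
    set cF := (4:ℝ) ^ r * R * Q * (Real.sqrt σ * (Real.sqrt τ * W))⁻¹ with hcF
    have hcN0 : 0 < cN := by positivity
    have hcF0 : 0 < cF := by positivity
    calc _ ≤ ∫ y, (cN * Real.exp (-(y - b) ^ 2 / (M * σ)) + cF * h y) := by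
          apply integral_mono_of_nonneg hf0 ((gi.const_mul _).add (hi.const_mul _))
          refine Filter.Eventually.of_forall fun y => ?_
          simp only []
          have h0 : 0 ≤ h y := (Real.exp_pos _).le.trans (hle y)
          rcases le_total (|X - (p - y)|) (|X| / 2) with hz | hz
          · refine le_trans ?_ (le_add_of_nonneg_right (by positivity))
            have e1 : X ^ 2 ≤ 4 * (p - y) ^ 2 := by
              have : |X| / 2 ≤ |p - y| := by
                have := abs_sub_abs_le_abs_sub X (p - y)
                linarith
              have h4 : (|X| / 2) ^ 2 ≤ |p - y| ^ 2 := by gcongr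
              rw [sq_abs, div_pow, sq_abs] at h4
              linarith
            have e2 : Real.exp (-(4 * (p - y) ^ 2) / (M * τ) - (y - b) ^ 2 / (M * σ)) ≤
                Real.exp (-X ^ 2 / (M * τ)) * Real.exp (-(y - b) ^ 2 / (M * σ)) := by
              rw [← Real.exp_add, neg_div (M * σ), ← sub_eq_add_neg]
              gcongr
            calc _ ≤ (Real.exp (-X ^ 2 / (M * τ)) * Real.exp (-(y - b) ^ 2 / (M * σ))) /
                  (Real.sqrt σ * (1 + ρ) ^ r * (Real.sqrt τ * W)) := by
                  have := hD y
                  gcongr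
              _ = _ := by rw [hcN]; field_simp
          · refine le_trans ?_ (le_add_of_nonneg_left (by positivity))
            have e1 : ((1 + |X - (p - y)| + ρ) ^ r)⁻¹ ≤ (4:ℝ) ^ r * R := by
              have : (1 + |X| + θ) ≤ 4 * (1 + |X - (p - y)| + ρ) := by linarith
              have h5 : (1 + |X| + θ) ^ r ≤ 4 ^ r * (1 + |X - (p - y)| + ρ) ^ r := by
                rw [← Real.mul_rpow (by norm_num) (by positivity)]
                exact Real.rpow_le_rpow (by positivity) this hr.le
              rw [hR, Real.rpow_neg (by positivity), ← div_eq_mul_inv, ← one_div]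
              rw [div_le_div_iff₀ (by positivity) (by positivity), one_mul]
              exact h5
            have e2 : Real.exp (-(4 * (p - y) ^ 2) / (M * τ) - (y - b) ^ 2 / (M * σ)) ≤
                Q * h y := by
              refine le_trans ?_ (mul_le_mul_of_nonneg_left (hle y) hQp.le)
              rw [hQ, ← Real.exp_add]
              apply Real.exp_le_exp.mpr
              have key := aux_key τ σ p b y hτ hσ
              have e3 : -(4 * (p - y) ^ 2) / (M * τ) - (y - b) ^ 2 / (M * σ) =
                -(4 * (p - y) ^ 2 / τ + (y - b) ^ 2 / σ) / M := by field_simp; ring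
              have e4 : -(p - b) ^ 2 / (2 * M * (τ + σ)) + (-(4 * (p - y) ^ 2) / (2 * M * τ) - (y - b) ^ 2 / (2 * M * σ)) =
                -(((p - b) ^ 2 / (τ + σ) + (4 * (p - y) ^ 2 / τ + (y - b) ^ 2 / σ)) / 2) / M := by field_simp; ring
              rw [e3, e4]
              apply div_le_div_of_nonneg_right _ hM.le
              linarith
            calc _ = Real.exp (-(4 * (p - y) ^ 2) / (M * τ) - (y - b) ^ 2 / (M * σ)) *
                    ((1 + |X - (p - y)| + ρ) ^ r)⁻¹ * (Real.sqrt σ * (Real.sqrt τ * W))⁻¹ := by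
                    field_simp
              _ ≤ (Q * h y) * ((4:ℝ) ^ r * R) * (Real.sqrt σ * (Real.sqrt τ * W))⁻¹ := by
                    gcongr
              _ = _ := by rw [hcF]; ring
      _ = cN * Real.sqrt (Real.pi * (M * σ)) + cF * ∫ y, h y := by
          rw [integral_add (gi.const_mul _) (hi.const_mul _), integral_const_mul, integral_const_mul, gint]
      _ ≤ K2 * A + K3 * B := by
          apply add_le_add
          · have := aux_near M τ σ X hM hτ hσ hX
            calc _ = Real.exp (-X ^ 2 / (M * τ)) / Real.sqrt τ * (Real.sqrt (Real.pi * M) * (W⁻¹ * ((1 + ρ) ^ r)⁻¹)) := by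
                  rw [hcN, ← mul_assoc Real.pi, Real.sqrt_mul (by positivity)]
                  field_simp
              _ ≤ (Real.sqrt (1 + M) * S) * (Real.sqrt (Real.pi * M) * (W⁻¹ * ((1 + ρ) ^ r)⁻¹)) := by
                  gcongr
              _ = _ := by rw [hK2, hA]; ring
          · calc _ ≤ cF * (Real.sqrt (2 * Real.pi * (2 * M)) * (Real.sqrt τ * Real.sqrt σ / Real.sqrt (τ + σ))) := by gcongr
              _ = _ := by rw [hcF, hK3, hB]; field_simp
      _ ≤ (K1 + K2 + K3) * (A + B) := by nlinarith [mul_pos hK1p hBp, mul_pos hK2p hBp, mul_pos hK1p hAp, mul_pos hK3p hAp]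

lemma aux_g1 (r : ℝ) (hr : 3 ≤ r) (s : ℝ) (hs : 0 ≤ s) :
    ((1 + Real.sqrt s) ^ r)⁻¹ ≤ (Real.sqrt (1 + s) * (1 + s))⁻¹ := by
  have h0 := Real.sqrt_nonneg s
  have h1 : (1 + Real.sqrt s) ^ (3:ℕ) ≤ (1 + Real.sqrt s) ^ r := by
    rw [← Real.rpow_natCast]
    apply Real.rpow_le_rpow_of_exponent_le (by linarith)
    exact_mod_cast hr
  have hsq := Real.sq_sqrt hs
  have h2 : 1 + s ≤ (1 + Real.sqrt s) ^ 2 := by nlinarith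
  have h3 : Real.sqrt (1 + s) ≤ 1 + Real.sqrt s := by
    rw [Real.sqrt_le_left (by positivity)]; exact h2
  apply inv_anti₀ (by positivity)
  calc _ ≤ (1 + Real.sqrt s) * (1 + Real.sqrt s) ^ 2 := by gcongr
    _ = (1 + Real.sqrt s) ^ 3 := by ring
    _ ≤ _ := h1

lemma aux_ftc (F f : ℝ → ℝ) (t : ℝ) (ht : 0 ≤ t) (hF : ContinuousOn F (Icc 0 t))
    (hd : ∀ s ∈ Ioo 0 t, HasDerivAt F (f s) s) (h0 : ∀ s ∈ Ioo 0 t, 0 ≤ f s) :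
    IntegrableOn f (Ioo 0 t) ∧ ∫ s in Ioo 0 t, f s = F t - F 0 := by
  have hi := intervalIntegral.integrableOn_deriv_of_nonneg hF hd h0
  refine ⟨hi.mono_set Ioo_subset_Ioc_self, ?_⟩
  rw [← integral_Ioc_eq_integral_Ioo, ← intervalIntegral.integral_of_le ht]
  exact intervalIntegral.integral_eq_sub_of_hasDerivAt_of_le ht hF hd
    ((intervalIntegrable_iff_integrableOn_Ioc_of_le ht).mpr hi)

lemma aux_o1 (j : ℕ) (hj : j = 0 ∨ j = 1) (t : ℝ) (ht : 0 ≤ t) :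
    ∃ g : ℝ → ℝ, IntegrableOn g (Ioo 0 t) ∧ (∫ s in Ioo 0 t, g s) ≤ 2 ∧
      ∀ s ∈ Ioo 0 t, ((t - s) ^ ((j:ℝ) / 2))⁻¹ * (Real.sqrt (1 + s) * (1 + s))⁻¹ ≤ g s := by
  rcases hj with rfl | rfl
  · obtain ⟨h1, h2⟩ := aux_ftc (fun s => -2 * (Real.sqrt (1 + s))⁻¹)
      (fun s => (Real.sqrt (1 + s) * (1 + s))⁻¹) t ht
      (by
        apply ContinuousOn.mul continuousOn_const
        apply ContinuousOn.inv₀ (by fun_prop)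
        intro s hs
        have := hs.1
        positivity)
      (by
        intro s hs
        have h0 := hs.1
        have hp : 0 < 1 + s := by linarith
        have hd := ((((hasDerivAt_id s).const_add 1).sqrt hp.ne').inv (Real.sqrt_pos.mpr hp).ne').const_mul (-2)
        refine hd.congr_deriv ?_
        try simp only [id, Pi.inv_apply]
        rw [Real.sq_sqrt hp.le]
        field_simp)
      (by
        intro s hs
        have h0 := hs.1
        positivity)
    refine ⟨_, h1, ?_, ?_⟩
    · rw [h2]
      simp
    · intro s hs
      simp
  · obtain ⟨h1, h2⟩ := aux_ftc (fun s => -2 / (1 + t) * (Real.sqrt (t - s) * (Real.sqrt (1 + s))⁻¹))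
      (fun s => (Real.sqrt (t - s))⁻¹ * (Real.sqrt (1 + s) * (1 + s))⁻¹) t ht
      (by
        apply ContinuousOn.mul continuousOn_const
        apply ContinuousOn.mul (by fun_prop)
        apply ContinuousOn.inv₀ (by fun_prop)
        intro s hs
        have := hs.1
        positivity)
      (by
        intro s hs
        have h0 := hs.1
        have hp : 0 < 1 + s := by linarith
        have hq : 0 < t - s := by linarith [hs.2]
        have hd := ((((hasDerivAt_id s).const_sub t).sqrt hq.ne').mul
          ((((hasDerivAt_id s).const_add 1).sqrt hp.ne').inv (Real.sqrt_pos.mpr hp).ne')).const_mul (-2 / (1 + t))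
        refine hd.congr_deriv ?_
        try simp only [id, Pi.inv_apply]
        have hp' := Real.sqrt_pos.mpr hp
        have hq' := Real.sqrt_pos.mpr hq
        have e1 := Real.sq_sqrt hp.le
        have e2 := Real.sq_sqrt hq.le
        set u := Real.sqrt (1 + s)
        set v := Real.sqrt (t - s)
        have e3 : 1 + t = u ^ 2 + v ^ 2 := by linarith
        rw [e3]
        try rw [← e1]
        field_simp
        ring)
      (by
        intro s hs
        have h0 := hs.1
        have hq : 0 < t - s := by linarith [hs.2]
        positivity)
    refine ⟨_, h1, ?_, ?_⟩
    · rw [h2]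
      have : Real.sqrt t ≤ 1 + t := by
        rw [Real.sqrt_le_left (by positivity)]
        nlinarith
      have h3 : Real.sqrt t / (1 + t) ≤ 1 := by rw [div_le_one (by positivity)]; exact this
      have : -2 / (1 + t) * (Real.sqrt (t - t) * (Real.sqrt (1 + t))⁻¹) -
        -2 / (1 + t) * (Real.sqrt (t - 0) * (Real.sqrt (1 + 0))⁻¹) = 2 * (Real.sqrt t / (1 + t)) := by
        simp
        ring
      rw [this]; linarith
    · intro s hs
      simp [Real.sqrt_eq_rpow]

lemma aux_o2 (M a : ℝ) (hM : 0 < M) (ha : a ≠ 0) (j : ℕ) (hj : j = 0 ∨ j = 1) :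
    ∃ B : ℝ, 0 < B ∧ ∀ X t : ℝ, 0 ≤ t →
    ∃ g : ℝ → ℝ, IntegrableOn g (Ioo 0 t) ∧ (∫ s in Ioo 0 t, g s) ≤ B ∧
      ∀ s ∈ Ioo 0 t, ((t - s) ^ ((j:ℝ) / 2))⁻¹ * (Real.sqrt (1 + t))⁻¹ *
        Real.exp (-(X - a * s) ^ 2 / (2 * M * (1 + t))) ≤ g s := by
  have hpi := Real.pi_pos
  have ha2 : 0 < a ^ 2 := by positivity
  rcases hj with rfl | rfl
  · refine ⟨Real.sqrt (Real.pi * (2 * M / a ^ 2)), by positivity, ?_⟩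
    intro X t ht
    obtain ⟨h1, h2⟩ := aux_gauss (2 * M / a ^ 2 * (1 + t)) (X / a) (by positivity)
    refine ⟨fun s => (Real.sqrt (1 + t))⁻¹ * Real.exp (-(s - X / a) ^ 2 / (2 * M / a ^ 2 * (1 + t))),
      (h1.const_mul _).integrableOn, ?_, ?_⟩
    · refine (setIntegral_le_integral (h1.const_mul _) (Filter.Eventually.of_forall fun s => ?_)).trans ?_
      · simp only [Pi.zero_apply]
        positivity
      · rw [integral_const_mul, h2, ← mul_assoc, Real.sqrt_mul (by positivity)]
        apply le_of_eq
        field_simp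
    · intro s hs
      apply le_of_eq
      simp
      left
      field_simp
      ring
  · refine ⟨2, by norm_num, ?_⟩
    intro X t ht
    obtain ⟨h1, h2⟩ := aux_ftc (fun s => -2 * Real.sqrt (t - s) * (Real.sqrt (1 + t))⁻¹)
      (fun s => (Real.sqrt (t - s))⁻¹ * (Real.sqrt (1 + t))⁻¹) t ht
      (by fun_prop)
      (by
        intro s hs
        have hq : 0 < t - s := by linarith [hs.2]
        have hd := ((((hasDerivAt_id s).const_sub t).sqrt hq.ne').const_mul (-2)).mul_const ((Real.sqrt (1 + t))⁻¹)
        refine hd.congr_deriv ?_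
        try simp only [id, Pi.inv_apply]
        field_simp)
      (by
        intro s hs
        positivity)
    refine ⟨_, h1, ?_, ?_⟩
    · rw [h2]
      have h3 : Real.sqrt t ≤ Real.sqrt (1 + t) := Real.sqrt_le_sqrt (by linarith)
      have h4 : Real.sqrt t * (Real.sqrt (1 + t))⁻¹ ≤ 1 := by
        rw [← div_eq_mul_inv, div_le_one (by positivity)]; exact h3
      simp
      linarith
    · intro s hs
      have hq : 0 < t - s := by linarith [hs.2]
      have e : ((t - s) ^ (((1:ℕ):ℝ) / 2))⁻¹ = (Real.sqrt (t - s))⁻¹ := by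
        simp [Real.sqrt_eq_rpow]
      rw [e]
      apply mul_le_of_le_one_right (by positivity)
      rw [Real.exp_le_one_iff, neg_div]
      have : 0 ≤ (X - a * s) ^ 2 / (2 * M * (1 + t)) := by positivity
      linarith

/-- Bound on the mixed Gaussian–algebraic convolution integral `IV_j`
(estimate (4.18) of the paper). -/
theorem bound_mixed_gaussian_algebraic_integral
    (M c₁ c₂ r : ℝ) (hM : 0 < M) (hc : c₁ ≠ c₂) (hr : 3 ≤ r)
    (j : ℕ) (hj : j = 0 ∨ j = 1) :
    ∃ C : ℝ, 0 < C ∧ ∀ x t : ℝ, 0 ≤ t →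
      (∫ s in Set.Ioo (0 : ℝ) t, ∫ y : ℝ,
          Real.exp (-(4 * (x - y + c₁ * (t - s)) ^ 2) / (M * (t - s)) -
              (y + c₂ * s) ^ 2 / (M * (1 + s))) /
            (Real.sqrt (1 + s) * (1 + |y + c₁ * s| + Real.sqrt s) ^ r *
              (t - s) ^ ((1 + (j : ℝ)) / 2))) ≤
        C * ((1 + |x + c₁ * t| + Real.sqrt t) ^ (-r) +
          Real.exp (-(x + c₁ * t) ^ 2 / (M * (1 + t))) / Real.sqrt (1 + t)) := by
  obtain ⟨K, hK, hin⟩ := aux_inner M r hM (by linarith)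
  obtain ⟨B, hB, ho2⟩ := aux_o2 M (c₁ - c₂) hM (sub_ne_zero.mpr hc) j hj
  refine ⟨K * (2 + B), by positivity, ?_⟩
  intro x t ht
  obtain ⟨g1, i1, b1, l1⟩ := aux_o1 j hj t ht
  obtain ⟨g2, i2, b2, l2⟩ := ho2 (x + c₁ * t) t ht
  set S := Real.exp (-(x + c₁ * t) ^ 2 / (M * (1 + t))) / Real.sqrt (1 + t) with hS
  set R := (1 + |x + c₁ * t| + Real.sqrt t) ^ (-r) with hR
  have hSp : 0 < S := by positivity
  have hRp : 0 < R := by positivity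
  calc _ ≤ ∫ s in Ioo 0 t, (K * S * g1 s + K * R * g2 s) := by
        apply integral_mono_of_nonneg
        · refine (ae_restrict_iff' measurableSet_Ioo).mpr (Filter.Eventually.of_forall fun s hs => ?_)
          simp only [Pi.zero_apply]
          have hq : 0 < t - s := by linarith [hs.2]
          apply integral_nonneg
          intro y
          simp only [Pi.zero_apply]
          positivity
        · exact (i1.const_mul _).add (i2.const_mul _)
        · refine (ae_restrict_iff' measurableSet_Ioo).mpr (Filter.Eventually.of_forall fun s hs => ?_)
          simp only []
          have hs0 := hs.1
          have hq : 0 < t - s := by linarith [hs.2]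
          have hT : t - s + (1 + s) = 1 + t := by ring
          have key := hin (t - s) (1 + s) (x + c₁ * (t - s)) (-c₂ * s) (x + c₁ * t) (Real.sqrt s)
            (Real.sqrt t) ((t - s) ^ ((j:ℝ) / 2)) hq (by linarith) (by positivity)
            (Real.sqrt_nonneg _) (Real.sqrt_nonneg _) (by rw [Real.sq_sqrt ht]; linarith)
          rw [hT, ← hS, ← hR] at key
          have m1 := (mul_le_mul_of_nonneg_left (aux_g1 r hr s hs0.le)
            (by positivity : 0 ≤ ((t - s) ^ ((j:ℝ) / 2))⁻¹)).trans (l1 s hs)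
          have m2 := l2 s hs
          have e0 : x + c₁ * (t - s) - -c₂ * s = x + c₁ * t - (c₁ - c₂) * s := by ring
          rw [e0] at key
          refine le_trans (le_of_eq ?_) (key.trans ?_)
          · congr 1
            ext y
            have e1 : x - y + c₁ * (t - s) = x + c₁ * (t - s) - y := by ring
            have e2 : y + c₂ * s = y - -c₂ * s := by ring
            have e3 : y + c₁ * s = x + c₁ * t - (x + c₁ * (t - s) - y) := by ring
            have e4 : (t - s) ^ ((1 + (j : ℝ)) / 2) = Real.sqrt (t - s) * (t - s) ^ ((j:ℝ) / 2) := by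
              rw [Real.sqrt_eq_rpow, ← Real.rpow_add hq]
              congr 1
              ring
            rw [e1, e2, e3, e4]
          · rw [mul_assoc K, mul_assoc K, ← mul_add]
            gcongr
    _ = K * S * (∫ s in Ioo 0 t, g1 s) + K * R * ∫ s in Ioo 0 t, g2 s := by
        rw [integral_add (i1.const_mul _) (i2.const_mul _), integral_const_mul, integral_const_mul]
    _ ≤ K * S * 2 + K * R * B := by gcongr
    _ ≤ K * (2 + B) * (R + S) := by
        nlinarith [mul_pos hK hSp, mul_pos hK hRp, mul_pos (mul_pos hK hSp) hB]
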